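/- arXiv:2103.15505 — 2 statements merged into one kernel-verified Lean document; each statement's English description precedes it below -/
import Mathlib

section
/- The set of self-homeomorphisms of C × C admitting a pair prefix local rule is a subgroup of the homeomorphism group of C × C: it contains the identity, and if f and g each admit a pair prefix local rule then so do f ∘ g and f⁻¹. -/
/-- Cantor space: sequences of binary digits (`false` = 0, `true` = 1). -/
abbrev C : Type := ℕ → Bool

/-- `wordApp u x` is the element of Cantor space beginning with the finite word `u`
and continuing with `x`. -/
def wordApp (u : List Bool) (x : C) : C := fun i => u.getD i (x (i - u.length))

/-- The language `L`: finite binary words that are empty or end in the digit 1. -/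
def InL (w : List Bool) : Prop := w = [] ∨ ∃ v : List Bool, w = v ++ [true]

/-- `X₀`: the set of finitely supported sequences. -/
def X0 : Set C := {x | {i : ℕ | x i = true}.Finite}

/-- `φ(w) = w ++ 0^∞`. -/
def phi (w : List Bool) : C := wordApp w (fun _ => false)

/-- Membership in Thompson's group `V`: a self-homeomorphism of Cantor space
admitting a prefix local rule. -/
def IsVElem (f : C ≃ₜ C) : Prop :=
  ∃ (n : ℕ) (F : List Bool → List Bool),
    ∀ u : List Bool, u.length = n → ∀ x : C, f (wordApp u x) = wordApp (F u) x

/-- Membership in the Brin–Thompson group `2V`: a self-homeomorphism of `C × C`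
admitting a pair prefix local rule. -/
def Is2VElem (f : (C × C) ≃ₜ (C × C)) : Prop :=
  ∃ (n : ℕ) (F1 F2 : List Bool → List Bool → List Bool),
    ∀ u v : List Bool, u.length = n → v.length = n →
      ∀ x y : C, f (wordApp u x, wordApp v y) = (wordApp (F1 u v) x, wordApp (F2 u v) y)

/-! A map with a pair prefix rule carries each sufficiently deep cone `u C × v C` onto another
cone by the prefix replacement `(u ++ x, v ++ y) ↦ (p ++ x, q ++ y)`. Such replacements restrict
to subcones, compose and invert. For a composite, going deeper into the source makes the image
cone deep enough for the second map. For an inverse, the cones of a fixed depth are finitely many,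
so their images have bounded depth; since these images cover `C × C`, every deeper cone lies
inside one of them. -/

section WordApp

variable {u v : List Bool} {x y : C} {i : ℕ}

theorem wordApp_apply_of_lt (h : i < u.length) : wordApp u x i = u[i] :=
  List.getD_eq_getElem u _ h

theorem wordApp_apply_of_le (h : u.length ≤ i) : wordApp u x i = x (i - u.length) :=
  List.getD_eq_default u _ h

theorem wordApp_append (u v : List Bool) (x : C) :
    wordApp (u ++ v) x = wordApp u (wordApp v x) := by
  funext i
  rcases lt_or_ge i u.length with h | h
  · rw [wordApp_apply_of_lt h, wordApp_apply_of_lt (by rw [List.length_append]; omega),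
      List.getElem_append_left h]
  · simp only [wordApp, List.length_append, List.getD_append_right u v _ i h,
      List.getD_eq_default u _ h, Nat.sub_sub]

theorem exists_eq_wordApp (n : ℕ) (x : C) :
    ∃ (u : List Bool) (y : C), u.length = n ∧ x = wordApp u y := by
  refine ⟨List.ofFn fun i : Fin n => x i, fun i => x (i + n), List.length_ofFn, ?_⟩
  funext i
  rcases lt_or_ge i n with h | h
  · rw [wordApp_apply_of_lt (by rwa [List.length_ofFn]), List.getElem_ofFn]
  · rw [wordApp_apply_of_le (by rwa [List.length_ofFn]), List.length_ofFn, Nat.sub_add_cancel h]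

theorem prefix_of_wordApp_eq_wordApp (h : wordApp u x = wordApp v y)
    (hle : u.length ≤ v.length) : u <+: v := by
  refine List.prefix_iff_getElem.2 ⟨hle, fun i hi => ?_⟩
  rw [← wordApp_apply_of_lt (x := x) hi, h, wordApp_apply_of_lt]

end WordApp

/-- `MapsCone f u v p q` says that `f` carries the cone `u C × v C` onto the cone `p C × q C` by
replacing the prefixes `u`, `v` with `p`, `q`. -/
def MapsCone (f : C × C → C × C) (u v p q : List Bool) : Prop :=
  ∀ x y : C, f (wordApp u x, wordApp v y) = (wordApp p x, wordApp q y)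

namespace MapsCone

variable {f g : C × C → C × C} {u v p q p' q' : List Bool}

theorem append (h : MapsCone f u v p q) (r s : List Bool) :
    MapsCone f (u ++ r) (v ++ s) (p ++ r) (q ++ s) := fun x y => by
  simp only [wordApp_append, h (wordApp r x) (wordApp s y)]

theorem comp (hf : MapsCone f p q p' q') (hg : MapsCone g u v p q) :
    MapsCone (f ∘ g) u v p' q' := fun x y => by
  rw [Function.comp_apply, hg, hf]

theorem of_leftInverse (h : MapsCone f u v p q) (hgf : Function.LeftInverse g f) :
    MapsCone g p q u v := fun x y => by
  rw [← h, hgf]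

end MapsCone

/-- A self-map of `C × C` has a pair prefix rule if it acts on all sufficiently deep cones by
prefix replacement. This is the condition of `Is2VElem` without invertibility; asking for all
words of length at least `n`, rather than exactly `n`, changes nothing since prefix replacements
restrict to subcones. -/
def HasPairPrefixRule (f : C × C → C × C) : Prop :=
  ∃ n : ℕ, ∀ u v : List Bool, n ≤ u.length → n ≤ v.length → ∃ p q, MapsCone f u v p q

theorem is2VElem_iff_hasPairPrefixRule {f : (C × C) ≃ₜ (C × C)} :
    Is2VElem f ↔ HasPairPrefixRule f := by
  constructor
  · rintro ⟨n, F₁, F₂, hF⟩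
    refine ⟨n, fun u v hu hv => ?_⟩
    have hcone : MapsCone f (u.take n) (v.take n) _ _ :=
      hF _ _ (List.length_take_of_le hu) (List.length_take_of_le hv)
    have := hcone.append (u.drop n) (v.drop n)
    rw [List.take_append_drop, List.take_append_drop] at this
    exact ⟨_, _, this⟩
  · rintro ⟨n, hn⟩
    choose! F₁ F₂ hF using hn
    exact ⟨n, F₁, F₂, fun u v hu hv => hF u v hu.ge hv.ge⟩

theorem exists_forall_length_eq_le {α : Type*} [Finite α] (n : ℕ) (F : List α → List α → ℕ) :
    ∃ N, ∀ u v : List α, u.length = n → v.length = n → F u v ≤ N := by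
  have hfin := (List.finite_length_eq α n).prod (List.finite_length_eq α n)
  obtain ⟨N, hN⟩ := (hfin.image fun w => F w.1 w.2).bddAbove
  exact ⟨N, fun u v hu hv => hN ⟨(u, v), ⟨hu, hv⟩, rfl⟩⟩

namespace HasPairPrefixRule

variable {f g : C × C → C × C}

protected theorem id : HasPairPrefixRule id :=
  ⟨0, fun u v _ _ => ⟨u, v, fun _ _ => rfl⟩⟩

theorem comp (hf : HasPairPrefixRule f) (hg : HasPairPrefixRule g) :
    HasPairPrefixRule (f ∘ g) := by
  obtain ⟨m, hm⟩ := hf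
  obtain ⟨n, hn⟩ := hg
  refine ⟨n + m, fun u v hu hv => ?_⟩
  obtain ⟨p, q, hpq⟩ := hn (u.take n) (v.take n)
    (by rw [List.length_take]; omega) (by rw [List.length_take]; omega)
  have hg' : MapsCone g u v (p ++ u.drop n) (q ++ v.drop n) := by
    simpa only [List.take_append_drop] using hpq.append (u.drop n) (v.drop n)
  obtain ⟨p', q', hf'⟩ := hm (p ++ u.drop n) (q ++ v.drop n)
    (by rw [List.length_append, List.length_drop]; omega)
    (by rw [List.length_append, List.length_drop]; omega)
  exact ⟨p', q', hf'.comp hg'⟩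

theorem of_inverse (hf : HasPairPrefixRule f) (hgf : Function.LeftInverse g f)
    (hfg : Function.RightInverse g f) : HasPairPrefixRule g := by
  obtain ⟨n, hn⟩ := hf
  choose! F₁ F₂ hF using hn
  obtain ⟨N, hN⟩ := exists_forall_length_eq_le n fun a b => max (F₁ a b).length (F₂ a b).length
  refine ⟨N, fun u v hu hv => ?_⟩
  -- Any point of the cone would do: the preimage of one point locates the whole cone.
  obtain ⟨⟨s, t⟩, hst⟩ := hfg.surjective (wordApp u fun _ => false, wordApp v fun _ => false)
  obtain ⟨a, x, ha, rfl⟩ := exists_eq_wordApp n s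
  obtain ⟨b, y, hb, rfl⟩ := exists_eq_wordApp n t
  have hab : MapsCone f a b (F₁ a b) (F₂ a b) := hF a b ha.ge hb.ge
  obtain ⟨hle₁, hle₂⟩ := max_le_iff.1 (hN a b ha hb)
  obtain ⟨h₁, h₂⟩ := Prod.mk.inj ((hab x y).symm.trans hst)
  obtain ⟨r, rfl⟩ := prefix_of_wordApp_eq_wordApp h₁ (hle₁.trans hu)
  obtain ⟨r', rfl⟩ := prefix_of_wordApp_eq_wordApp h₂ (hle₂.trans hv)
  exact ⟨a ++ r, b ++ r', (hab.append r r').of_leftInverse hgf⟩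

end HasPairPrefixRule

/-- The self-homeomorphisms of `C × C` admitting a pair prefix local rule form a
subgroup of the homeomorphism group of `C × C`: the identity admits one, and if `f`
and `g` do, then so do `f ∘ g` (which is `g.trans f`) and `f⁻¹`. -/
theorem twoV_is_subgroup :
    Is2VElem (Homeomorph.refl (C × C)) ∧
    (∀ f g : (C × C) ≃ₜ (C × C), Is2VElem f → Is2VElem g → Is2VElem (g.trans f)) ∧
    (∀ f : (C × C) ≃ₜ (C × C), Is2VElem f → Is2VElem f.symm) := by
  simp only [is2VElem_iff_hasPairPrefixRule]
  exact ⟨HasPairPrefixRule.id, fun _ _ hf hg => hf.comp hg,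
    fun f hf => hf.of_inverse f.symm_apply_apply f.apply_symm_apply⟩
end

section
/- Identify Fin 6 with the alphabet (0_A, 1_A, @, 0_B, 1_B, #) in this order, and let M be the 6×6 zero-one matrix with rows [1,1,1,0,0,0], [1,1,1,0,0,0], [0,0,0,1,1,1], [0,0,0,1,1,0], [0,0,0,1,1,1], [0,1,1,0,0,0]. Let X' := {x : ℤ → Fin 6 | ∀ i, M (x i) (x (i+1)) = 1} be the corresponding vertex shift. Let Y' be the set of x : ℤ → Fin 6 such that: the set of positions carrying @ or # is unbounded above and below; reading along ℤ, the separators @ and # strictly alternate; between each occurrence of # and the next occurrence of @, the intervening word uses only the symbols 0_A, 1_A and is either empty or begins with 1_A (equivalently, its reversal lies in L after renaming 0_A, 1_A to 0, 1); and between each occurrence of @ and the next occurrence of #, the intervening word uses only the symbols 0_B, 1_B and is either empty or ends with 1_B (equivalently, it lies in L after renaming 0_B, 1_B to 0, 1). Then the topological closure of Y' in the product topology on (Fin 6)^ℤ is exactly X'. -/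
/-- The 6×6 zero-one transition matrix, rows and columns indexed by the alphabet
`(0_A, 1_A, @, 0_B, 1_B, #)` in this order. -/
def M6 : Fin 6 → Fin 6 → ℕ :=
  ![![1,1,1,0,0,0],
    ![1,1,1,0,0,0],
    ![0,0,0,1,1,1],
    ![0,0,0,1,1,0],
    ![0,0,0,1,1,1],
    ![0,1,1,0,0,0]]

/-- The vertex shift of `M6`. -/
def X6 : Set (ℤ → Fin 6) := {x | ∀ i : ℤ, M6 (x i) (x (i + 1)) = 1}

/-- `i` carries a separator (`@` = 2 or `#` = 5). -/
def Sep6 (x : ℤ → Fin 6) (i : ℤ) : Prop := x i = 2 ∨ x i = 5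

/-- Configurations `⋯ uₖ @ vₖ # uₖ₊₁ @ vₖ₊₁ # ⋯`: separators `@`, `#` occur unboundedly in
both directions and strictly alternate; between a `#` (= 5) and the next `@` (= 2) the word
uses only `0_A, 1_A` (= 0, 1) and is empty or begins with `1_A` (so its reversal is in `L`);
between an `@` and the next `#` the word uses only `0_B, 1_B` (= 3, 4) and is empty or ends
with `1_B` (so it is in `L`). -/
def Y6 : Set (ℤ → Fin 6) := {x |
  (∀ n : ℤ, ∃ i : ℤ, n < i ∧ Sep6 x i) ∧
  (∀ n : ℤ, ∃ i : ℤ, i < n ∧ Sep6 x i) ∧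
  (∀ i j : ℤ, Sep6 x i → Sep6 x j → i < j → (∀ k : ℤ, i < k → k < j → ¬ Sep6 x k) →
    ((x i = 5 → x j = 2 ∧ (∀ k : ℤ, i < k → k < j → x k = 0 ∨ x k = 1) ∧
        (j = i + 1 ∨ x (i + 1) = 1)) ∧
     (x i = 2 → x j = 5 ∧ (∀ k : ℤ, i < k → k < j → x k = 3 ∨ x k = 4) ∧
        (j = i + 1 ∨ x (j - 1) = 4))))}

/-!
A configuration lies in `Y6` iff it lies in `X6` and carries separators arbitrarily far to the left
and to the right: the transitions allowed by `M6` between two consecutive separators are exactly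
those of the words allowed by `Y6`. Since `X6` is closed, it remains to see that configurations
with recurrent separators are dense in `X6`. From every symbol one can continue, both forwards and
backwards, by a path of `M6` that meets separators again and again; replacing the two tails of `x`
outside a large window by such paths gives points of `Y6` converging to `x`.
-/

open Set Filter Topology

section General

variable {α : Type*} {R : α → α → Prop} {S : Set α} {f g : α → α} {x : ℤ → α} {m n i j : ℤ}

/-- The vertex shift of a relation `R`, given as a `Prop`-valued transition matrix: the
bi-infinite walks along `R`. -/
def vertexShift (R : α → α → Prop) : Set (ℤ → α) := {x | ∀ i, R (x i) (x (i + 1))}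

/-- The configurations that visit `S` arbitrarily far to the right and to the left. -/
def biRecurrent (S : Set α) : Set (ℤ → α) :=
  {x | (∃ᶠ i in atTop, x i ∈ S) ∧ ∃ᶠ i in atBot, x i ∈ S}

theorem isClosed_vertexShift [TopologicalSpace α] (hR : IsClosed {p : α × α | R p.1 p.2}) :
    IsClosed (vertexShift R) := by
  have hset : vertexShift R = ⋂ i : ℤ, (fun x ↦ (x i, x (i + 1))) ⁻¹' {p | R p.1 p.2} := by
    ext x
    simp only [vertexShift, mem_ofPred_eq, mem_iInter, mem_preimage]
  rw [hset]
  exact isClosed_iInter fun i ↦ hR.preimage (by fun_prop)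

/-- The configuration that agrees with `x` on the window `[m, n]`, follows the `f`-orbit of `x n`
to its right and the `g`-orbit of `x m` to its left. As `Int.toNat` truncates at `0`, at most one
of the two iterates is nontrivial when `m ≤ n`. -/
def extendByOrbits (f g : α → α) (x : ℤ → α) (m n : ℤ) (i : ℤ) : α :=
  f^[(i - n).toNat] (g^[(m - i).toNat] (x (max m (min i n))))

theorem extendByOrbits_of_mem_Icc (hi : i ∈ Icc m n) : extendByOrbits f g x m n i = x i := by
  obtain ⟨hmi, hin⟩ := hi
  simp only [extendByOrbits, Int.toNat_of_nonpos (sub_nonpos.2 hin),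
    Int.toNat_of_nonpos (sub_nonpos.2 hmi), Function.iterate_zero_apply, min_eq_left hin,
    max_eq_right hmi]

theorem extendByOrbits_add_natCast (hmn : m ≤ n) (k : ℕ) :
    extendByOrbits f g x m n (n + k) = f^[k] (x n) := by
  have hleft : (m - (n + k)).toNat = 0 := by lia
  have hright : (n + k - n).toNat = k := by lia
  have hbase : max m (min (n + k) n) = n := by lia
  simp only [extendByOrbits, hleft, hright, hbase, Function.iterate_zero_apply]

theorem extendByOrbits_sub_natCast (hmn : m ≤ n) (k : ℕ) :
    extendByOrbits f g x m n (m - k) = g^[k] (x m) := by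
  have hleft : (m - (m - k)).toNat = k := by lia
  have hright : (m - k - n).toNat = 0 := by lia
  have hbase : max m (min (m - k) n) = m := by lia
  simp only [extendByOrbits, hleft, hright, hbase, Function.iterate_zero_apply]

theorem extendByOrbits_mem_vertexShift (hx : x ∈ vertexShift R) (hf : ∀ a, R a (f a))
    (hg : ∀ a, R (g a) a) (hmn : m ≤ n) : extendByOrbits f g x m n ∈ vertexShift R := by
  intro i
  rcases lt_or_ge i m with him | hmi
  · obtain ⟨k, rfl⟩ : ∃ k : ℕ, i = m - (k + 1 : ℕ) := ⟨(m - i - 1).toNat, by lia⟩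
    rw [show m - ((k + 1 : ℕ) : ℤ) + 1 = m - k by lia, extendByOrbits_sub_natCast hmn,
      extendByOrbits_sub_natCast hmn, Function.iterate_succ_apply']
    exact hg _
  rcases lt_or_ge i n with hin | hni
  · rw [extendByOrbits_of_mem_Icc ⟨hmi, hin.le⟩, extendByOrbits_of_mem_Icc ⟨by lia, hin⟩]
    exact hx i
  · obtain ⟨k, rfl⟩ := Int.exists_add_of_le hni
    rw [show n + (k : ℤ) + 1 = n + (k + 1 : ℕ) by lia, extendByOrbits_add_natCast hmn,
      extendByOrbits_add_natCast hmn, Function.iterate_succ_apply']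
    exact hf _

theorem extendByOrbits_mem_biRecurrent (hf : ∀ a, ∃ k, f^[k] a ∈ S) (hg : ∀ a, ∃ k, g^[k] a ∈ S)
    (hmn : m ≤ n) : extendByOrbits f g x m n ∈ biRecurrent S := by
  refine ⟨frequently_atTop.2 fun b ↦ ?_, frequently_atBot.2 fun b ↦ ?_⟩
  · obtain ⟨k, hk⟩ := hf (f^[(b - n).toNat] (x n))
    refine ⟨n + (k + (b - n).toNat : ℕ), by lia, ?_⟩
    rwa [extendByOrbits_add_natCast hmn, Function.iterate_add_apply]
  · obtain ⟨k, hk⟩ := hg (g^[(m - b).toNat] (x m))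
    refine ⟨m - (k + (m - b).toNat : ℕ), by lia, ?_⟩
    rwa [extendByOrbits_sub_natCast hmn, Function.iterate_add_apply]

theorem tendsto_extendByOrbits [TopologicalSpace α] (f g : α → α) (x : ℤ → α) :
    Tendsto (fun n : ℕ ↦ extendByOrbits f g x (-n) n) atTop (𝓝 x) := by
  refine tendsto_pi_nhds.2 fun i ↦ tendsto_const_nhds.congr' ?_
  filter_upwards [eventually_ge_atTop i.natAbs] with n hn
  exact (extendByOrbits_of_mem_Icc ⟨by lia, by lia⟩).symm

theorem vertexShift_subset_closure_inter_biRecurrent [TopologicalSpace α]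
    (hRf : ∀ a, R a (f a)) (hRg : ∀ a, R (g a) a)
    (hfS : ∀ a, ∃ k, f^[k] a ∈ S) (hgS : ∀ a, ∃ k, g^[k] a ∈ S) :
    vertexShift R ⊆ closure (vertexShift R ∩ biRecurrent S) := fun x hx ↦
  mem_closure_of_tendsto (tendsto_extendByOrbits f g x) <| .of_forall fun _ ↦
    ⟨extendByOrbits_mem_vertexShift hx hRf hRg (by lia),
      extendByOrbits_mem_biRecurrent hfS hgS (by lia)⟩

/-- `i < j` are consecutive positions satisfying `P`. -/
structure IsConsecutive (P : ℤ → Prop) (i j : ℤ) : Prop where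
  left : P i
  right : P j
  lt : i < j
  not_between : ∀ k, i < k → k < j → ¬ P k

theorem exists_isConsecutive_mem_Ico {P : ℤ → Prop} (htop : ∃ᶠ i in atTop, P i)
    (hbot : ∃ᶠ i in atBot, P i) (k : ℤ) : ∃ i j, IsConsecutive P i j ∧ k ∈ Ico i j := by
  obtain ⟨j, ⟨hkj, hj⟩, hmin⟩ := Int.exists_least_of_bdd (P := fun z ↦ k < z ∧ P z)
    ⟨k, fun _ hz ↦ hz.1.le⟩ (frequently_atTop'.1 htop k)
  obtain ⟨i, ⟨hik, hi⟩, hmax⟩ := Int.exists_greatest_of_bdd (P := fun z ↦ z ≤ k ∧ P z)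
    ⟨k, fun _ hz ↦ hz.1⟩ (frequently_atBot.1 hbot k)
  refine ⟨i, j, ⟨hi, hj, hik.trans_lt hkj, fun l hil hlj hl ↦ ?_⟩, hik, hkj⟩
  rcases le_or_gt l k with hlk | hkl
  · exact (hmax l ⟨hlk, hl⟩).not_gt hil
  · exact (hmin l ⟨hkl, hl⟩).not_gt hlj

theorem forall_mem_Ioc_of_forall_rel {T : Set α} (hR : ∀ k ∈ Ico i j, R (x k) (x (k + 1)))
    (hstart : ∀ b, R (x i) b → b ∈ T) (hstep : ∀ a ∈ T, a ∉ S → ∀ b, R a b → b ∈ T)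
    (hS : ∀ k, i < k → k < j → x k ∉ S) : ∀ k ∈ Ioc i j, x k ∈ T := by
  rintro k ⟨hik, hkj⟩
  induction k, hik using Int.leInduction with
  | base => exact hstart _ (hR i ⟨le_rfl, hkj⟩)
  | succ k hik ih =>
    exact hstep _ (ih (by lia)) (hS k hik hkj) _ (hR k ⟨by lia, hkj⟩)

end General

section Blocks

variable {x : ℤ → Fin 6} {i j : ℤ}

theorem M6_hash_eq_one_iff : ∀ {b}, M6 5 b = 1 ↔ b = 1 ∨ b = 2 := by decide

theorem M6_at_eq_one_iff : ∀ {b}, M6 2 b = 1 ↔ b = 3 ∨ b = 4 ∨ b = 5 := by decide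

theorem M6_eq_one_iff_of_A : ∀ {a b}, a = 0 ∨ a = 1 → (M6 a b = 1 ↔ b = 0 ∨ b = 1 ∨ b = 2) := by
  decide

theorem M6_eq_one_iff_of_B :
    ∀ {a b}, a = 3 ∨ a = 4 → (M6 a b = 1 ↔ b = 3 ∨ b = 4 ∨ a = 4 ∧ b = 5) := by
  decide

/-- The pattern `# u @` on `[i, j]`, where `u` is a word over `0_A, 1_A` whose reversal is
in `L`. -/
structure IsBlockA (x : ℤ → Fin 6) (i j : ℤ) : Prop where
  left : x i = 5
  right : x j = 2
  between : ∀ k, i < k → k < j → x k = 0 ∨ x k = 1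
  start : j = i + 1 ∨ x (i + 1) = 1

/-- The pattern `@ v #` on `[i, j]`, where `v` is a word over `0_B, 1_B` in `L`. -/
structure IsBlockB (x : ℤ → Fin 6) (i j : ℤ) : Prop where
  left : x i = 2
  right : x j = 5
  between : ∀ k, i < k → k < j → x k = 3 ∨ x k = 4
  finish : j = i + 1 ∨ x (j - 1) = 4

theorem IsBlockA.M6_eq_one (h : IsBlockA x i j) : ∀ k ∈ Ico i j, M6 (x k) (x (k + 1)) = 1 := by
  rintro k ⟨hik, hkj⟩
  rcases hik.eq_or_lt with rfl | hik
  · rw [h.left, M6_hash_eq_one_iff]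
    exact h.start.symm.imp_right fun hj : j = i + 1 ↦ hj ▸ h.right
  · rw [M6_eq_one_iff_of_A (h.between k hik hkj)]
    rcases (show k + 1 ≤ j from hkj).eq_or_lt with hj | hkj'
    · exact .inr (.inr (hj ▸ h.right))
    · exact (h.between (k + 1) (by lia) hkj').imp_right .inl

theorem IsBlockB.M6_eq_one (h : IsBlockB x i j) : ∀ k ∈ Ico i j, M6 (x k) (x (k + 1)) = 1 := by
  rintro k ⟨hik, hkj⟩
  rcases hik.eq_or_lt with rfl | hik
  · rw [h.left, M6_at_eq_one_iff]
    rcases (show i + 1 ≤ j from hkj).eq_or_lt with hj | hij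
    · exact .inr (.inr (hj ▸ h.right))
    · exact (h.between (i + 1) (by lia) hij).imp_right .inl
  · rw [M6_eq_one_iff_of_B (h.between k hik hkj)]
    rcases (show k + 1 ≤ j from hkj).eq_or_lt with rfl | hkj'
    · have hk : x k = 4 := by simpa [hik.ne'] using h.finish
      exact .inr (.inr ⟨hk, h.right⟩)
    · exact (h.between (k + 1) (by lia) hkj').imp_right .inl

theorem IsConsecutive.isBlockA (h : IsConsecutive (Sep6 x) i j) (hi : x i = 5)
    (hM : ∀ k ∈ Ico i j, M6 (x k) (x (k + 1)) = 1) : IsBlockA x i j := by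
  have hA : ∀ k ∈ Ioc i j, x k ∈ ({0, 1, 2} : Set (Fin 6)) := by
    refine forall_mem_Ioc_of_forall_rel (R := fun a b ↦ M6 a b = 1) (S := {2, 5}) hM ?_ ?_
      h.not_between
    · rw [hi]
      exact fun b hb ↦ .inr (M6_hash_eq_one_iff.1 hb)
    · intro a ha haS b hb
      have ha' : a = 0 ∨ a = 1 := by grind
      exact (M6_eq_one_iff_of_A ha').1 hb
  have hj : x j = 2 := by
    have := hA j ⟨h.lt, le_rfl⟩
    have := h.right
    grind [Sep6]
  have hbetween : ∀ k, i < k → k < j → x k = 0 ∨ x k = 1 := by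
    intro k hik hkj
    have := hA k ⟨hik, hkj.le⟩
    have := h.not_between k hik hkj
    grind [Sep6]
  refine ⟨hi, hj, hbetween, (Int.add_one_le_of_lt h.lt).eq_or_lt.imp Eq.symm fun hij ↦ ?_⟩
  have hfirst : x (i + 1) = 1 ∨ x (i + 1) = 2 :=
    M6_hash_eq_one_iff.1 (hi ▸ hM i ⟨le_rfl, h.lt⟩)
  exact hfirst.resolve_right fun h2 ↦ h.not_between (i + 1) (by lia) hij (.inl h2)

theorem IsConsecutive.isBlockB (h : IsConsecutive (Sep6 x) i j) (hi : x i = 2)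
    (hM : ∀ k ∈ Ico i j, M6 (x k) (x (k + 1)) = 1) : IsBlockB x i j := by
  have hB : ∀ k ∈ Ioc i j, x k ∈ ({3, 4, 5} : Set (Fin 6)) := by
    refine forall_mem_Ioc_of_forall_rel (R := fun a b ↦ M6 a b = 1) (S := {2, 5}) hM ?_ ?_
      h.not_between
    · rw [hi]
      exact fun b hb ↦ M6_at_eq_one_iff.1 hb
    · intro a ha haS b hb
      have ha' : a = 3 ∨ a = 4 := by grind
      exact ((M6_eq_one_iff_of_B ha').1 hb).imp_right (.imp_right And.right)
  have hj : x j = 5 := by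
    have := hB j ⟨h.lt, le_rfl⟩
    have := h.right
    grind [Sep6]
  have hbetween : ∀ k, i < k → k < j → x k = 3 ∨ x k = 4 := by
    intro k hik hkj
    have := hB k ⟨hik, hkj.le⟩
    have := h.not_between k hik hkj
    grind [Sep6]
  refine ⟨hi, hj, hbetween, (Int.add_one_le_of_lt h.lt).eq_or_lt.imp Eq.symm fun hij ↦ ?_⟩
  have hlast : M6 (x (j - 1)) 5 = 1 := by
    have := hM (j - 1) ⟨by lia, by lia⟩
    rwa [sub_add_cancel, hj] at this
  have := (M6_eq_one_iff_of_B (hbetween (j - 1) (by lia) (by lia))).1 hlast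
  grind

theorem IsConsecutive.forall_M6_eq_one_iff (h : IsConsecutive (Sep6 x) i j) :
    (∀ k ∈ Ico i j, M6 (x k) (x (k + 1)) = 1) ↔ IsBlockA x i j ∨ IsBlockB x i j :=
  ⟨fun hM ↦ h.left.symm.imp (h.isBlockA · hM) (h.isBlockB · hM),
    fun hAB ↦ hAB.elim IsBlockA.M6_eq_one IsBlockB.M6_eq_one⟩

theorem X6_eq_vertexShift : X6 = vertexShift (M6 · · = 1) := rfl

theorem mem_Y6_iff : x ∈ Y6 ↔ x ∈ biRecurrent {2, 5} ∧
    ∀ i j, IsConsecutive (Sep6 x) i j → IsBlockA x i j ∨ IsBlockB x i j := by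
  constructor
  · rintro ⟨htop, hbot, hblocks⟩
    refine ⟨⟨frequently_atTop'.2 htop, frequently_atBot'.2 hbot⟩, fun i j h ↦ ?_⟩
    obtain ⟨hA, hB⟩ := hblocks i j h.left h.right h.lt h.not_between
    refine h.left.symm.imp (fun hi ↦ ?_) fun hi ↦ ?_
    · exact ⟨hi, (hA hi).1, (hA hi).2.1, (hA hi).2.2⟩
    · exact ⟨hi, (hB hi).1, (hB hi).2.1, (hB hi).2.2⟩
  · rintro ⟨⟨htop, hbot⟩, hblocks⟩
    refine ⟨frequently_atTop'.1 htop, frequently_atBot'.1 hbot, fun i j hi hj hij hnot ↦ ?_⟩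
    rcases hblocks i j ⟨hi, hj, hij, hnot⟩ with hA | hB
    · exact ⟨fun _ ↦ ⟨hA.right, hA.between, hA.start⟩, fun h ↦ by simp [hA.left] at h⟩
    · exact ⟨fun h ↦ by simp [hB.left] at h, fun _ ↦ ⟨hB.right, hB.between, hB.finish⟩⟩

theorem Y6_eq_X6_inter_biRecurrent : Y6 = X6 ∩ biRecurrent {2, 5} := by
  ext x
  rw [mem_Y6_iff, and_comm]
  refine and_congr_left fun ⟨htop, hbot⟩ ↦ ⟨fun hblocks k ↦ ?_, fun hx i j h ↦ ?_⟩
  · obtain ⟨i, j, h, hk⟩ := exists_isConsecutive_mem_Ico htop hbot k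
    exact h.forall_M6_eq_one_iff.2 (hblocks i j h) k hk
  · exact h.forall_M6_eq_one_iff.1 fun k _ ↦ hx k

end Blocks

/-- A choice of an `M6`-successor for each symbol, every orbit of which keeps visiting separators:
`0_A, 1_A ↦ @`, `0_B ↦ 1_B ↦ #`, and `@ ↔ #`. -/
def nextTowardSep : Fin 6 → Fin 6 := ![2, 2, 5, 4, 5, 2]

/-- A choice of an `M6`-predecessor for each symbol, every orbit of which keeps visiting
separators. It is the mirror image of `nextTowardSep` under exchanging the indices `A` and `B`. -/
def prevTowardSep : Fin 6 → Fin 6 := ![1, 5, 5, 2, 2, 2]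

theorem M6_nextTowardSep : ∀ a, M6 a (nextTowardSep a) = 1 := by decide

theorem M6_prevTowardSep : ∀ a, M6 (prevTowardSep a) a = 1 := by decide

theorem exists_iterate_nextTowardSep_mem (a : Fin 6) :
    ∃ k, nextTowardSep^[k] a ∈ ({2, 5} : Set (Fin 6)) :=
  ⟨2, by revert a; decide⟩

theorem exists_iterate_prevTowardSep_mem (a : Fin 6) :
    ∃ k, prevTowardSep^[k] a ∈ ({2, 5} : Set (Fin 6)) :=
  ⟨2, by revert a; decide⟩

/-- The closure of `Y6` in the product topology on `(Fin 6)^ℤ` is exactly the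
vertex shift `X6`. -/
theorem closure_Y6_eq_X6 : closure Y6 = X6 := by
  rw [Y6_eq_X6_inter_biRecurrent, X6_eq_vertexShift]
  refine (closure_minimal inter_subset_left ?_).antisymm ?_
  · exact isClosed_vertexShift (isClosed_discrete _)
  · exact vertexShift_subset_closure_inter_biRecurrent M6_nextTowardSep M6_prevTowardSep
      exists_iterate_nextTowardSep_mem exists_iterate_prevTowardSep_mem
end
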